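/- For γ = 0 the logarithmic rate in the Reconstruction Theorem is optimal: consider the germ F_x(y) := log(1 + 1/|y−x|) on ℝ^d. This germ is (α,0)-coherent for every α < 0, yet there exists no distribution f ∈ D' such that |(f − F_x)(ψ_x^λ)| = o(log(1+1/λ)) as λ ↓ 0, uniformly for x in a ball B(0,2), where ψ is any fixed nonnegative test function with ψ(0) > 0 and ∫ψ = 1. -/

import Mathlib

open MeasureTheory Metric Set Filter

noncomputable section

abbrev Ed (d : ℕ) := EuclideanSpace ℝ (Fin d)

/-- Test functions: smooth compactly supported functions on ℝ^d. -/
def IsTestFunction {d : ℕ} (φ : Ed d → ℝ) : Prop :=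
  ContDiff ℝ (⊤ : ℕ∞) φ ∧ HasCompactSupport φ

/-- The scaled test function `φ_x^λ(z) = λ^{-d} φ(λ⁻¹(z - x))`. -/
def scaled {d : ℕ} (φ : Ed d → ℝ) (x : Ed d) (l : ℝ) : Ed d → ℝ :=
  fun z => (l ^ d)⁻¹ * φ (l⁻¹ • (z - x))

/-- The `C^r` norm: sup of the norms of the iterated derivatives of order ≤ r. -/
def Cnorm {d : ℕ} (r : ℕ) (φ : Ed d → ℝ) : ℝ :=
  ⨆ i : Fin (r + 1), ⨆ x : Ed d, ‖iteratedFDeriv ℝ (i : ℕ) φ x‖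

/-- The family `B_r` of test functions supported in `B(0,1)` with `C^r` norm at most 1. -/
def Br {d : ℕ} (r : ℕ) (ψ : Ed d → ℝ) : Prop :=
  IsTestFunction ψ ∧ tsupport ψ ⊆ closedBall (0 : Ed d) 1 ∧ Cnorm r ψ ≤ 1

/-- A linear functional is a distribution if on every compact set it is bounded
by some `C^r` norm. -/
def IsDistribution {d : ℕ} (T : (Ed d → ℝ) →ₗ[ℝ] ℝ) : Prop :=
  ∀ K : Set (Ed d), IsCompact K → ∃ r : ℕ, ∃ C : ℝ,
    ∀ φ : Ed d → ℝ, IsTestFunction φ → tsupport φ ⊆ K → |T φ| ≤ C * Cnorm r φ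

/-- A germ: a measurable family of distributions. -/
def IsGerm {d : ℕ} (F : Ed d → ((Ed d → ℝ) →ₗ[ℝ] ℝ)) : Prop :=
  (∀ x, IsDistribution (F x)) ∧
  ∀ ψ : Ed d → ℝ, IsTestFunction ψ → Measurable fun x => F x ψ

/-- Monomial `y^k` for a multi-index `k`. -/
def mono {d : ℕ} (k : Fin d → ℕ) (y : Ed d) : ℝ := ∏ i, (y i) ^ (k i)

/-- Convolution of two functions. -/
def conv {d : ℕ} (f g : Ed d → ℝ) : Ed d → ℝ := fun x => ∫ y, f (x - y) * g y

/-- `rIndex α` is the smallest integer `r > -α` (for `α ≤ 0`). -/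
def rIndex (α : ℝ) : ℕ := Nat.floor (-α) + 1

/-- Negative Hölder space condition `T ∈ C^α` for `α ≤ 0`. -/
def HolderNeg {d : ℕ} (α : ℝ) (T : (Ed d → ℝ) →ₗ[ℝ] ℝ) : Prop :=
  ∀ K : Set (Ed d), IsCompact K → ∃ C : ℝ, ∀ x ∈ K, ∀ ε ∈ Set.Ioc (0:ℝ) 1,
    ∀ ψ : Ed d → ℝ, Br (rIndex α) ψ → |T (scaled ψ x ε)| ≤ C * ε ^ α

/-- `(α,γ)`-coherence of a germ with respect to the test function φ. -/
def AlphaGammaCoherent {d : ℕ} (α γ : ℝ) (F : Ed d → ((Ed d → ℝ) →ₗ[ℝ] ℝ))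
    (φ : Ed d → ℝ) : Prop :=
  ∀ K : Set (Ed d), IsCompact K → ∃ C : ℝ, ∀ y ∈ K, ∀ z ∈ K, ∀ ε ∈ Set.Ioc (0:ℝ) 1,
    |F z (scaled φ y ε) - F y (scaled φ y ε)| ≤ C * ε ^ α * (‖z - y‖ + ε) ^ (γ - α)

/-- Global homogeneity bound β for a germ with respect to the test function φ. -/
def HomBound {d : ℕ} (β : ℝ) (F : Ed d → ((Ed d → ℝ) →ₗ[ℝ] ℝ)) (φ : Ed d → ℝ) : Prop :=
  ∀ K : Set (Ed d), IsCompact K → ∃ C : ℝ, ∀ x ∈ K, ∀ ε ∈ Set.Ioc (0:ℝ) 1,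
    |F x (scaled φ x ε)| ≤ C * ε ^ β

/-!
The kernel satisfies `F_x(φ_y^ε) = log (1 + 1/ε) ∫ φ + O(1 + log (1 + |x - y|/ε))`, uniformly in
`x`, `y` and `ε`: this is local integrability of `log |·|`, after rescaling. In a difference
`(F_z - F_y)(φ_y^ε)` the leading terms cancel, and the remaining logarithm grows more slowly than
any power of `1 + |z - y|/ε`, which is coherence.

On the other hand, the rescalings `f(ψ_x^l)` of a fixed distribution cannot diverge
uniformly for `x` in a ball. Averaging against a bump function `η` on the ball and writing
`p = ψ_0^l`, one has
`∫ η(x) f(p(· - x)) dx = f(η ⋆ p) = ∫ p(x) f(η(· - x)) dx`,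
and the last integral is bounded as `l → 0` because `∫ |p| = ∫ |ψ|`, whereas the average of
`F_x(ψ_x^l)` is of order `log (1/l)`.
-/

section LogPotential

open Real
open scoped Topology

theorem abs_log_one_add_sub_log_one_add_le {a b : ℝ} (ha : 0 < a) (hb : 0 < b) :
    |log (1 + a) - log (1 + b)| ≤ |log a - log b| := by
  wlog hba : b ≤ a generalizing a b
  · rw [abs_sub_comm, abs_sub_comm (log a)]
    exact this hb ha (le_of_not_ge hba)
  rw [abs_of_nonneg (sub_nonneg.2 (log_le_log (by positivity) (by gcongr))),
    abs_of_nonneg (sub_nonneg.2 (log_le_log hb hba)),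
    ← log_div (by positivity) (by positivity), ← log_div ha.ne' hb.ne']
  refine log_le_log (by positivity) ?_
  rw [div_le_div_iff₀ (by positivity) hb]
  linarith

theorem tendsto_log_one_add_inv_nhdsGT_zero :
    Tendsto (fun l : ℝ => log (1 + l⁻¹)) (𝓝[>] 0) atTop :=
  tendsto_log_atTop.comp (tendsto_atTop_add_const_left _ 1 tendsto_inv_nhdsGT_zero)

theorem log_one_add_le_rpow_div {a p : ℝ} (ha : 0 ≤ a) (hp : 0 < p) :
    1 + log (1 + a) ≤ (1 + 1 / p) * (1 + a) ^ p := by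
  have hone : 1 ≤ (1 + a) ^ p := one_le_rpow (by linarith) hp.le
  have hlog : log (1 + a) ≤ (1 + a) ^ p / p := log_le_rpow_div (by linarith) hp
  calc 1 + log (1 + a) ≤ (1 + a) ^ p + (1 + a) ^ p / p := add_le_add hone hlog
    _ = (1 + 1 / p) * (1 + a) ^ p := by ring

theorem integrableOn_posLog_inv_Ioi : IntegrableOn (fun t : ℝ => log⁺ t⁻¹) (Ioi 0) := by
  rw [← Ioc_union_Ioi_eq_Ioi zero_le_one, integrableOn_union]
  constructor
  · have hlog : IntegrableOn log (Ioc 0 1) :=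
      (intervalIntegrable_iff_integrableOn_Ioc_of_le zero_le_one).1
        intervalIntegral.intervalIntegrable_log'
    refine hlog.neg.congr_fun (fun t ht => ?_) measurableSet_Ioc
    rw [posLog_eq_log (by rw [abs_inv, abs_of_pos ht.1]; exact (one_le_inv₀ ht.1).2 ht.2), log_inv]
    rfl
  · refine integrableOn_zero.congr_fun (fun t ht => ?_) measurableSet_Ioi
    refine ((posLog_eq_zero_iff _).2 ?_).symm
    rw [abs_inv]
    exact inv_le_one_of_one_le₀ (le_of_lt (ht.trans_le (le_abs_self t)))

variable {E : Type*} [NormedAddCommGroup E]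

theorem abs_log_norm_sub_le (w b : E) :
    |log ‖w - b‖| ≤ log⁺ ‖w - b‖⁻¹ + (1 + log (1 + ‖b‖)) * (1 + log (1 + ‖w‖)) := by
  have hw : 0 ≤ log (1 + ‖w‖) := log_nonneg (by linarith [norm_nonneg w])
  have hb : 0 ≤ log (1 + ‖b‖) := log_nonneg (by linarith [norm_nonneg b])
  have hpos : log⁺ ‖w - b‖ ≤ log (1 + ‖w‖) + log (1 + ‖b‖) := by
    rw [posLog_eq_log_max_one (norm_nonneg _), ← log_mul (by positivity) (by positivity)]
    refine log_le_log (by positivity) (max_le ?_ ?_) <;>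
      nlinarith [norm_sub_le w b, norm_nonneg w, norm_nonneg b]
  have hsplit : |log ‖w - b‖| = log⁺ ‖w - b‖ + log⁺ ‖w - b‖⁻¹ := by
    rw [← half_mul_log_add_log_abs, ← half_mul_log_add_log_abs, log_inv, abs_neg]
    ring
  linarith [mul_nonneg hb hw]

theorem abs_log_norm_sub_mul_le (w b : E) {c M : ℝ} (hc : |c| ≤ M) :
    |log ‖w - b‖ * c| ≤
      M * log⁺ ‖w - b‖⁻¹ + (1 + log (1 + ‖b‖)) * ((1 + log (1 + ‖w‖)) * |c|) := by
  have hlog := mul_le_mul_of_nonneg_right (abs_log_norm_sub_le w b) (abs_nonneg c)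
  have hnear := mul_le_mul_of_nonneg_left hc (posLog_nonneg (x := ‖w - b‖⁻¹))
  rw [abs_mul]
  linarith

variable [NormedSpace ℝ E] [FiniteDimensional ℝ E] [Nontrivial E] [MeasurableSpace E]
  [BorelSpace E]

theorem integrable_posLog_inv_norm (μ : Measure E) [μ.IsAddHaarMeasure] :
    Integrable (fun v : E => log⁺ ‖v‖⁻¹) μ := by
  rw [integrable_fun_norm_addHaar μ (f := fun t => log⁺ t⁻¹)]
  refine Integrable.mono integrableOn_posLog_inv_Ioi
    (Measurable.aestronglyMeasurable (by fun_prop)) ?_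
  filter_upwards [ae_restrict_mem measurableSet_Ioi] with t ht
  rw [smul_eq_mul, norm_mul, norm_pow, Real.norm_of_nonneg (le_of_lt ht)]
  obtain ht1 | ht1 := le_total t 1
  · exact mul_le_of_le_one_left (norm_nonneg _) (pow_le_one₀ (le_of_lt ht) ht1)
  · rw [(posLog_eq_zero_iff _).2 (by rw [abs_inv, abs_of_pos ht]; exact inv_le_one_of_one_le₀ ht1),
      norm_zero, mul_zero]

theorem exists_integral_abs_log_norm_sub_mul_le (μ : Measure E) [μ.IsAddHaarMeasure] {φ : E → ℝ}
    (hφ : Continuous φ) (hsupp : HasCompactSupport φ) :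
    ∃ C : ℝ, ∀ b : E, Integrable (fun w => log ‖w - b‖ * φ w) μ ∧
      ∫ w, |log ‖w - b‖ * φ w| ∂μ ≤ C * (1 + log (1 + ‖b‖)) := by
  obtain ⟨M, hM⟩ := hsupp.exists_bound_of_continuous hφ
  set near := ∫ v : E, log⁺ ‖v‖⁻¹ ∂μ
  set far := ∫ w, (1 + log (1 + ‖w‖)) * |φ w| ∂μ
  have hnear (b : E) : Integrable (fun w => M * log⁺ ‖w - b‖⁻¹) μ :=
    ((integrable_posLog_inv_norm μ).comp_sub_right b).const_mul M
  have hfar (b : E) :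
      Integrable (fun w => (1 + log (1 + ‖b‖)) * ((1 + log (1 + ‖w‖)) * |φ w|)) μ := by
    refine (Continuous.integrable_of_hasCompactSupport ?_ hsupp.abs.mul_left).const_mul _
    have hlog : Continuous fun w : E => log (1 + ‖w‖) :=
      Continuous.log (by fun_prop) fun w => by positivity
    exact (hlog.const_add 1).mul hφ.abs
  have hle (b w : E) := abs_log_norm_sub_mul_le w b (hM w)
  have hint (b : E) : Integrable (fun w => log ‖w - b‖ * φ w) μ :=
    ((hnear b).add (hfar b)).mono' (Measurable.mul (by fun_prop) hφ.measurable).aestronglyMeasurable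
      (ae_of_all _ (hle b))
  refine ⟨M * near + far, fun b => ⟨hint b, ?_⟩⟩
  have hlog : 0 ≤ log (1 + ‖b‖) := log_nonneg (by linarith [norm_nonneg b])
  have hM0 : 0 ≤ M := (norm_nonneg _).trans (hM 0)
  have hnear0 : 0 ≤ near := integral_nonneg fun _ => posLog_nonneg
  calc ∫ w, |log ‖w - b‖ * φ w| ∂μ
      ≤ ∫ w, (M * log⁺ ‖w - b‖⁻¹ + (1 + log (1 + ‖b‖)) * ((1 + log (1 + ‖w‖)) * |φ w|)) ∂μ :=
        integral_mono (hint b).abs ((hnear b).add (hfar b)) (hle b)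
    _ = M * near + (1 + log (1 + ‖b‖)) * far := by
        rw [integral_add (hnear b) (hfar b), integral_const_mul, integral_const_mul,
          integral_sub_right_eq_self (fun v => log⁺ ‖v‖⁻¹) b]
    _ ≤ (M * near + far) * (1 + log (1 + ‖b‖)) := by
        linarith [mul_nonneg (mul_nonneg hM0 hnear0) hlog]

theorem exists_abs_integral_log_one_add_inv_mul_sub_le (μ : Measure E) [μ.IsAddHaarMeasure]
    {φ : E → ℝ} (hφ : Continuous φ) (hsupp : HasCompactSupport φ) :
    ∃ C : ℝ, ∀ b : E, ∀ ε > 0,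
      |∫ w, log (1 + (ε * ‖w - b‖)⁻¹) * φ w ∂μ - log (1 + ε⁻¹) * ∫ w, φ w ∂μ| ≤
        C * (1 + log (1 + ‖b‖)) := by
  obtain ⟨C, hC⟩ := exists_integral_abs_log_norm_sub_mul_le μ hφ hsupp
  refine ⟨C, fun b ε hε => ?_⟩
  obtain ⟨hint, hle⟩ := hC b
  set error := fun w => (log (1 + (ε * ‖w - b‖)⁻¹) - log (1 + ε⁻¹)) * φ w
  have herror : ∀ᵐ w ∂μ, ‖error w‖ ≤ |log ‖w - b‖ * φ w| := by
    filter_upwards [Measure.ae_ne μ b] with w hw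
    have hnorm : 0 < ‖w - b‖ := norm_pos_iff.2 (sub_ne_zero.2 hw)
    have hlogs := abs_log_one_add_sub_log_one_add_le
      (inv_pos.2 (mul_pos hε hnorm)) (inv_pos.2 hε)
    rw [log_inv, log_inv, log_mul hε.ne' hnorm.ne',
      show -(log ε + log ‖w - b‖) - -log ε = -log ‖w - b‖ by ring, abs_neg] at hlogs
    rw [Real.norm_eq_abs, abs_mul, abs_mul]
    exact mul_le_mul_of_nonneg_right hlogs (abs_nonneg _)
  have herror_int : Integrable error μ :=
    hint.abs.mono' (Measurable.mul (by fun_prop) hφ.measurable).aestronglyMeasurable herror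
  have hmain : Integrable (fun w => log (1 + ε⁻¹) * φ w) μ :=
    (hφ.integrable_of_hasCompactSupport hsupp).const_mul _
  have hsplit : ∫ w, log (1 + (ε * ‖w - b‖)⁻¹) * φ w ∂μ =
      ∫ w, error w ∂μ + log (1 + ε⁻¹) * ∫ w, φ w ∂μ := by
    rw [← integral_const_mul, ← integral_add herror_int hmain]
    exact integral_congr_ae (ae_of_all _ fun w => by simp only [error]; ring)
  rw [hsplit, add_sub_cancel_right]
  exact (norm_integral_le_of_norm_le hint.abs herror).trans hle

end LogPotential

section Scaling

variable {d : ℕ} {φ : Ed d → ℝ}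

namespace IsTestFunction

theorem integrable (hφ : IsTestFunction φ) : Integrable φ :=
  hφ.1.continuous.integrable_of_hasCompactSupport hφ.2

theorem scaled (hφ : IsTestFunction φ) (x : Ed d) {l : ℝ} (hl : 0 < l) :
    IsTestFunction (scaled φ x l) := by
  constructor
  · exact contDiff_const.mul (hφ.1.comp ((contDiff_id.sub contDiff_const).const_smul l⁻¹))
  · exact (hφ.2.comp_homeomorph ((Homeomorph.subRight x).trans
      (Homeomorph.smulOfNeZero l⁻¹ (inv_ne_zero hl.ne')))).mul_left

theorem comp_sub (hφ : IsTestFunction φ) (x : Ed d) :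
    IsTestFunction fun z => φ (z - x) :=
  ⟨hφ.1.comp (contDiff_id.sub contDiff_const), hφ.2.comp_homeomorph (.subRight x)⟩

end IsTestFunction

theorem integral_mul_scaled (g φ : Ed d → ℝ) (y : Ed d) {l : ℝ} (hl : 0 < l) :
    ∫ v, g v * scaled φ y l v = ∫ w, g (y + l • w) * φ w := by
  have hcomp := Measure.integral_comp_inv_smul_of_nonneg (volume : Measure (Ed d))
    (fun w => g (y + l • w) * φ w) hl.le
  rw [finrank_euclideanSpace_fin, smul_eq_mul] at hcomp
  rw [← inv_mul_cancel_left₀ (pow_pos hl d).ne' (∫ w, g (y + l • w) * φ w), ← hcomp,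
    ← integral_const_mul,
    ← integral_sub_right_eq_self (fun v => (l ^ d)⁻¹ * (g (y + l • l⁻¹ • v) * φ (l⁻¹ • v))) y]
  refine integral_congr_ae (ae_of_all _ fun v => ?_)
  simp only [scaled, smul_inv_smul₀ hl.ne', add_sub_cancel]
  ring

theorem integral_abs_scaled (φ : Ed d → ℝ) (y : Ed d) {l : ℝ} (hl : 0 < l) :
    ∫ v, |scaled φ y l v| = ∫ w, |φ w| := by
  have habs (v : Ed d) : |scaled φ y l v| = scaled (fun w => |φ w|) y l v := by
    rw [scaled, scaled, abs_mul, abs_of_pos (by positivity)]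
  simpa only [habs, one_mul] using integral_mul_scaled (fun _ => 1) (fun w => |φ w|) y hl

theorem scaled_eq_scaled_zero_comp_sub (φ : Ed d → ℝ) (x : Ed d) (l : ℝ) :
    scaled φ x l = fun z => scaled φ 0 l (z - x) := by
  ext
  simp only [scaled, sub_zero]

theorem support_scaled_zero_subset {R : ℝ} (hR : Function.support φ ⊆ closedBall 0 R) {l : ℝ}
    (hl : l ∈ Ioc (0 : ℝ) 1) : Function.support (scaled φ 0 l) ⊆ closedBall 0 R := by
  intro z hz
  have hball := hR (right_ne_zero_of_mul hz : φ (l⁻¹ • (z - 0)) ≠ 0)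
  rw [mem_closedBall_zero_iff, sub_zero, norm_smul, norm_inv, Real.norm_of_nonneg hl.1.le] at hball
  rw [mem_closedBall_zero_iff]
  calc ‖z‖ ≤ l⁻¹ * ‖z‖ := le_mul_of_one_le_left (norm_nonneg z) ((one_le_inv₀ hl.1).2 hl.2)
    _ ≤ R := hball

theorem exists_abs_integral_log_mul_scaled_sub_le [Nontrivial (Ed d)] (hφ : IsTestFunction φ) :
    ∃ C : ℝ, ∀ x y : Ed d, ∀ ε > 0,
      |(∫ v, Real.log (1 + ‖v - x‖⁻¹) * scaled φ y ε v) - Real.log (1 + ε⁻¹) * ∫ w, φ w| ≤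
        C * (1 + Real.log (1 + ‖x - y‖ / ε)) := by
  obtain ⟨C, hC⟩ :=
    exists_abs_integral_log_one_add_inv_mul_sub_le volume hφ.1.continuous hφ.2
  refine ⟨C, fun x y ε hε => ?_⟩
  have hnorm : ‖ε⁻¹ • (x - y)‖ = ‖x - y‖ / ε := by
    rw [norm_smul, norm_inv, Real.norm_of_nonneg hε.le, inv_mul_eq_div]
  have hdist (w : Ed d) : ‖y + ε • w - x‖ = ε * ‖w - ε⁻¹ • (x - y)‖ := by
    rw [← Real.norm_of_nonneg hε.le, ← norm_smul, Real.norm_of_nonneg hε.le, smul_sub,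
      smul_inv_smul₀ hε.ne']
    congr 1
    abel
  simpa only [integral_mul_scaled _ φ y hε, hdist, hnorm] using hC (ε⁻¹ • (x - y)) ε hε

theorem alphaGammaCoherent_of_log_kernel [Nontrivial (Ed d)] {F : Ed d → ((Ed d → ℝ) →ₗ[ℝ] ℝ)}
    (hF : ∀ (x : Ed d) (ψ : Ed d → ℝ), IsTestFunction ψ →
      F x ψ = ∫ y, Real.log (1 + ‖y - x‖⁻¹) * ψ y)
    {α : ℝ} (hα : α < 0) (hφ : IsTestFunction φ) : AlphaGammaCoherent α 0 F φ := by
  intro K _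
  obtain ⟨C, hC⟩ := exists_abs_integral_log_mul_scaled_sub_le hφ
  refine ⟨2 * C * (1 + 1 / -α), fun y _ z _ ε hε => ?_⟩
  have hε0 : 0 < ε := hε.1
  set A := ‖z - y‖ / ε
  have hA : 0 ≤ A := by positivity
  have hfar := hC z y ε hε0
  have hnear :
      |(∫ v, Real.log (1 + ‖v - y‖⁻¹) * scaled φ y ε v) - Real.log (1 + ε⁻¹) * ∫ w, φ w| ≤ C := by
    simpa using hC y y ε hε0
  have hC0 : 0 ≤ C := (abs_nonneg _).trans hnear
  have hpow : ε ^ α * (‖z - y‖ + ε) ^ (0 - α) = (1 + A) ^ (-α) := by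
    rw [show ‖z - y‖ + ε = ε * (1 + A) by simp only [A]; field_simp; ring, zero_sub,
      Real.mul_rpow hε0.le (by positivity), ← mul_assoc, ← Real.rpow_add hε0, add_neg_cancel,
      Real.rpow_zero, one_mul]
  rw [hF z _ (hφ.scaled y hε0), hF y _ (hφ.scaled y hε0)]
  calc _ ≤ C * (1 + Real.log (1 + A)) + C := (abs_sub_le _ _ _).trans
        (add_le_add hfar ((abs_sub_comm _ _).trans_le hnear))
    _ ≤ 2 * C * (1 + Real.log (1 + A)) := by
        linarith [mul_nonneg hC0 (Real.log_nonneg (le_add_of_nonneg_right hA))]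
    _ ≤ 2 * C * ((1 + 1 / -α) * (1 + A) ^ (-α)) := by
        gcongr
        exact log_one_add_le_rpow_div hA (neg_pos.2 hα)
    _ = _ := by rw [← hpow]; ring

end Scaling

section Convolution

open scoped Convolution

variable {G F : Type*} [NormedAddCommGroup G] [MeasurableSpace G] {μ : Measure G}
  [NormedAddCommGroup F] [NormedSpace ℝ F]

theorem convolution_lsmul_linearIsometryEquiv_comp {F' : Type*} [NormedAddCommGroup F']
    [NormedSpace ℝ F'] (L : F ≃ₗᵢ[ℝ] F') (f : G → ℝ) (g : G → F) :
    f ⋆[.lsmul ℝ ℝ, μ] (L ∘ g) = L ∘ (f ⋆[.lsmul ℝ ℝ, μ] g) := by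
  ext1 z
  simpa [convolution_def] using
    L.toContinuousLinearEquiv.integral_comp_comm (μ := μ) fun t => f t • g (z - t)

theorem iteratedFDeriv_convolution_lsmul [NormedSpace ℝ G] [BorelSpace G] [SFinite μ]
    [μ.IsAddLeftInvariant] {f : G → ℝ} {g : G → F} (hf : LocallyIntegrable f μ)
    (hsupp : HasCompactSupport g) {i : ℕ} (hg : ContDiff ℝ i g) :
    iteratedFDeriv ℝ i (f ⋆[.lsmul ℝ ℝ, μ] g) = f ⋆[.lsmul ℝ ℝ, μ] iteratedFDeriv ℝ i g := by
  induction i with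
  | zero =>
    rw [iteratedFDeriv_zero_eq_comp, iteratedFDeriv_zero_eq_comp,
      convolution_lsmul_linearIsometryEquiv_comp]
  | succ i ih =>
    have hderiv : ContDiff ℝ 1 (iteratedFDeriv ℝ i g) :=
      hg.iteratedFDeriv_right (by norm_cast; omega)
    ext1 z
    rw [iteratedFDeriv_succ_eq_comp_left, ih (hg.of_le (by norm_cast; omega)),
      Function.comp_apply, ((hsupp.iteratedFDeriv i).hasFDerivAt_convolution_right
        (.lsmul ℝ ℝ) hf hderiv z).fderiv, iteratedFDeriv_succ_eq_comp_left]
    exact (congrFun (convolution_lsmul_linearIsometryEquiv_comp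
      (continuousMultilinearCurryLeftEquiv ℝ (fun _ : Fin (i + 1) => G) F).symm f
      (fderiv ℝ (iteratedFDeriv ℝ i g))) z).symm

end Convolution

section Jets

open TopologicalSpace
open scoped Distributions BoundedContinuousFunction

variable {d : ℕ}

/-- Bounded continuous fields of jets of order at most `r` on `ℝ^d`, with no compatibility between
the orders: a Banach space under the sup norm. A distribution extends to it from the test functions
supported in a fixed compact set by Hahn–Banach, which lets it commute with Bochner integrals. -/
def JetSpace (d r : ℕ) : Type :=
  ∀ i : Fin (r + 1), Ed d →ᵇ (Ed d [×i]→L[ℝ] ℝ)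

namespace JetSpace

instance (r : ℕ) : NormedAddCommGroup (JetSpace d r) := Pi.normedAddCommGroup

instance (r : ℕ) : NormedSpace ℝ (JetSpace d r) := Pi.normedSpace

instance (r : ℕ) : CompleteSpace (JetSpace d r) :=
  inferInstanceAs (CompleteSpace (∀ i : Fin (r + 1), Ed d →ᵇ (Ed d [×i]→L[ℝ] ℝ)))

theorem ext {r : ℕ} {u v : JetSpace d r} (h : ∀ i z, u i z = v i z) : u = v :=
  funext fun i => BoundedContinuousFunction.ext (h i)

theorem norm_apply_le {r : ℕ} (u : JetSpace d r) (i : Fin (r + 1)) (z : Ed d) : ‖u i z‖ ≤ ‖u‖ :=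
  ((u i).norm_coe_le_norm z).trans
    (norm_le_pi_norm (G := fun i : Fin (r + 1) => Ed d →ᵇ (Ed d [×i]→L[ℝ] ℝ)) u i)

/-- Evaluation of the derivative of order `i` of a jet at the point `z`. -/
def evalCLM {r : ℕ} (i : Fin (r + 1)) (z : Ed d) : JetSpace d r →L[ℝ] (Ed d [×i]→L[ℝ] ℝ) :=
  LinearMap.mkContinuous
    { toFun := fun u => u i z
      map_add' := fun _ _ => rfl
      map_smul' := fun _ _ => rfl }
    1 fun u => by rw [one_mul]; exact u.norm_apply_le i z

end JetSpace

/-- The `r`-jet `(φ, Dφ, …, D^r φ)` of a test function supported in `K`. -/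
def jet (K : Compacts (Ed d)) (r : ℕ) : 𝓓_{K}(Ed d, ℝ) →ₗ[ℝ] JetSpace d r :=
  LinearMap.pi fun i : Fin (r + 1) => ContDiffMapSupportedIn.structureMapLM ℝ ⊤ (i : ℕ)

theorem jet_apply (K : Compacts (Ed d)) (r : ℕ) (φ : 𝓓_{K}(Ed d, ℝ)) (i : Fin (r + 1)) (x : Ed d) :
    jet K r φ i x = iteratedFDeriv ℝ i φ x :=
  congrFun (ContDiffMapSupportedIn.structureMapLM_top_apply ℝ φ) x

theorem jet_injective (K : Compacts (Ed d)) (r : ℕ) : Function.Injective (jet K r) :=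
  fun _ _ h => ContDiffMapSupportedIn.structureMapLM_zero_injective ℝ (congrFun h 0)

theorem Cnorm_nonneg (r : ℕ) (φ : Ed d → ℝ) : 0 ≤ Cnorm r φ :=
  Real.iSup_nonneg fun _ => Real.iSup_nonneg fun _ => norm_nonneg _

theorem Cnorm_le_norm_jet (K : Compacts (Ed d)) (r : ℕ) (φ : 𝓓_{K}(Ed d, ℝ)) :
    Cnorm r φ ≤ ‖jet K r φ‖ :=
  ciSup_le fun i => ciSup_le fun x => by
    rw [← jet_apply]
    exact (jet K r φ).norm_apply_le i x

theorem IsDistribution.exists_continuousLinearMap_jet {f : (Ed d → ℝ) →ₗ[ℝ] ℝ}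
    (hf : IsDistribution f) (K : Compacts (Ed d)) :
    ∃ r, ∃ g : JetSpace d r →L[ℝ] ℝ, ∀ φ : 𝓓_{K}(Ed d, ℝ), f φ = g (jet K r φ) := by
  obtain ⟨r, C, hC⟩ := hf K K.isCompact
  let e := LinearEquiv.ofInjective (jet K r) (jet_injective K r)
  let fJet : LinearMap.range (jet K r) →ₗ[ℝ] ℝ :=
    { toFun := fun u => f (e.symm u)
      map_add' := fun u v => by rw [map_add]; exact map_add f _ _
      map_smul' := fun c u => by rw [map_smul]; exact map_smul f _ _ }
  have hbound (u : LinearMap.range (jet K r)) : ‖fJet u‖ ≤ |C| * ‖u‖ := by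
    obtain ⟨φ, rfl⟩ := e.surjective u
    have hφ := hC φ ⟨φ.contDiff, φ.hasCompactSupport⟩ φ.tsupport_subset
    calc ‖fJet (e φ)‖ = |f φ| := by simp [fJet]
      _ ≤ C * Cnorm r φ := hφ
      _ ≤ |C| * Cnorm r φ := mul_le_mul_of_nonneg_right (le_abs_self C) (Cnorm_nonneg r φ)
      _ ≤ |C| * ‖jet K r φ‖ := mul_le_mul_of_nonneg_left (Cnorm_le_norm_jet K r φ) (abs_nonneg C)
  obtain ⟨g, hg, -⟩ := exists_extension_norm_eq _ (fJet.mkContinuous |C| hbound)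
  refine ⟨r, g, fun φ => ?_⟩
  have := hg (e φ)
  simpa [fJet, e] using this.symm

end Jets

section Translates

open TopologicalSpace
open scoped Distributions BoundedContinuousFunction Convolution Pointwise

theorem continuous_smul_comp_sub {G F : Type*} [NormedAddCommGroup G]
    [NormedAddCommGroup F] [NormedSpace ℝ F] {η : G → ℝ} {h : G → F} (hη : Continuous η)
    (hh : Continuous h) (hsupp : HasCompactSupport h) {u : G → G →ᵇ F}
    (hu : ∀ x z, u x z = η x • h (z - x)) : Continuous u := by
  let translate (x : G) : G →ᵇ F :=
    (BoundedContinuousFunction.ofNormedAddCommGroup h hh _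
      (hsupp.exists_bound_of_continuous hh).choose_spec).compContinuous
      ⟨(· - x), continuous_id.sub continuous_const⟩
  have htranslate : Continuous translate := by
    refine Metric.continuous_iff.2 fun x₀ ε hε => ?_
    obtain ⟨δ, hδ, hclose⟩ := Metric.uniformContinuous_iff.1
      (hsupp.uniformContinuous_of_continuous hh) (ε / 2) (half_pos hε)
    refine ⟨δ, hδ, fun x hx => lt_of_le_of_lt ?_ (half_lt_self hε)⟩
    refine (BoundedContinuousFunction.dist_le (half_pos hε).le).2 fun z =>
      (hclose ((dist_sub_left z x x₀).trans_lt hx)).le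
  have hu' : u = fun x => η x • translate x := funext fun x => BoundedContinuousFunction.ext (hu x)
  rw [hu']
  exact hη.smul htranslate

variable {d : ℕ} {K : Compacts (Ed d)} {η p : Ed d → ℝ} {u : Ed d → 𝓓_{K}(Ed d, ℝ)}

theorem jet_apply_smul_comp_sub (hp : ContDiff ℝ (⊤ : ℕ∞) p)
    (hu : ∀ x z, u x z = η x • p (z - x)) {r : ℕ} (i : Fin (r + 1)) (x z : Ed d) :
    jet K r (u x) i z = η x • iteratedFDeriv ℝ i p (z - x) := by
  rw [jet_apply, show ⇑(u x) = η x • fun z => p (z - x) from funext (hu x),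
    iteratedFDeriv_const_smul_apply (ContDiff.contDiffAt ?_), iteratedFDeriv_comp_sub]
  exact (hp.comp (contDiff_id.sub contDiff_const)).of_le (mod_cast le_top)

theorem integrable_jet_smul_comp_sub (hη : IsTestFunction η)
    (hp : IsTestFunction p) (hu : ∀ x z, u x z = η x • p (z - x)) (r : ℕ) :
    Integrable fun x => jet K r (u x) := by
  refine Continuous.integrable_of_hasCompactSupport (continuous_pi fun i => ?_) ?_
  · exact continuous_smul_comp_sub hη.1.continuous
      (hp.1.continuous_iteratedFDeriv (mod_cast le_top)) (hp.2.iteratedFDeriv i)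
      (jet_apply_smul_comp_sub hp.1 hu i)
  · refine hη.2.mono fun x hx hηx => hx ?_
    have hux : u x = 0 := ContDiffMapSupportedIn.ext fun z => by rw [hu, hηx, zero_smul]; rfl
    simp only [hux, map_zero]

theorem integral_jet_smul_comp_sub (hη : IsTestFunction η)
    (hp : IsTestFunction p) (hu : ∀ x z, u x z = η x • p (z - x)) {v : 𝓓_{K}(Ed d, ℝ)}
    (hv : ⇑v = η ⋆[.lsmul ℝ ℝ, volume] p) (r : ℕ) :
    ∫ x, jet K r (u x) = jet K r v := by
  refine JetSpace.ext fun i z => ?_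
  calc (∫ x, jet K r (u x)) i z = ∫ x, jet K r (u x) i z :=
        ((JetSpace.evalCLM i z).integral_comp_comm
          (integrable_jet_smul_comp_sub hη hp hu r)).symm
    _ = ∫ x, η x • iteratedFDeriv ℝ i p (z - x) := by
        simp only [jet_apply_smul_comp_sub hp.1 hu]
    _ = iteratedFDeriv ℝ i (η ⋆[.lsmul ℝ ℝ, volume] p) z := by
        rw [iteratedFDeriv_convolution_lsmul hη.1.continuous.locallyIntegrable hp.2
          (hp.1.of_le (mod_cast le_top))]
        rfl
    _ = jet K r v i z := by rw [jet_apply, hv]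

theorem IsDistribution.integrable_and_integral_mul_apply_comp_sub
    {f : (Ed d → ℝ) →ₗ[ℝ] ℝ} (hf : IsDistribution f) (hη : IsTestFunction η)
    (hp : IsTestFunction p) :
    Integrable (fun x => η x * f fun z => p (z - x)) ∧
      ∫ x, η x * f (fun z => p (z - x)) = f (η ⋆[.lsmul ℝ ℝ, volume] p) := by
  let K : Compacts (Ed d) := ⟨tsupport η + tsupport p, hη.2.isCompact.add hp.2.isCompact⟩
  let u (x : Ed d) : 𝓓_{K}(Ed d, ℝ) :=
    .of_support_subset (f := fun z => η x • p (z - x))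
      ((hp.comp_sub x).1.const_smul (η x)) fun z hz =>
        ⟨x, subset_tsupport _ (left_ne_zero_of_smul hz), z - x,
          subset_tsupport _ (right_ne_zero_of_smul hz), add_sub_cancel x z⟩
  let v : 𝓓_{K}(Ed d, ℝ) :=
    .of_support_subset (f := η ⋆[.lsmul ℝ ℝ, volume] p)
      (hp.2.contDiff_convolution_right _ hη.1.continuous.locallyIntegrable hp.1)
      ((support_convolution_subset _).trans
        (add_subset_add (subset_tsupport _) (subset_tsupport _)))
  obtain ⟨r, g, hg⟩ := hf.exists_continuousLinearMap_jet K
  have hgu : (fun x => η x * f fun z => p (z - x)) = fun x => g (jet K r (u x)) := by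
    ext x
    rw [← hg, ← smul_eq_mul, ← map_smul]
    rfl
  have hint : Integrable fun x => jet K r (u x) :=
    integrable_jet_smul_comp_sub hη hp (fun _ _ => rfl) r
  rw [hgu]
  refine ⟨g.integrable_comp hint, ?_⟩
  rw [g.integral_comp_comm hint, integral_jet_smul_comp_sub hη hp (v := v) (fun _ _ => rfl) rfl r,
    ← hg]
  rfl

theorem IsDistribution.integral_mul_apply_comp_sub_comm {f : (Ed d → ℝ) →ₗ[ℝ] ℝ}
    (hf : IsDistribution f) (hη : IsTestFunction η) (hp : IsTestFunction p) :
    ∫ x, η x * f (fun z => p (z - x)) = ∫ x, p x * f (fun z => η (z - x)) := by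
  have hflip : (ContinuousLinearMap.lsmul ℝ ℝ : ℝ →L[ℝ] ℝ →L[ℝ] ℝ).flip = .lsmul ℝ ℝ := by
    ext
    simp
  rw [(hf.integrable_and_integral_mul_apply_comp_sub hη hp).2,
    (hf.integrable_and_integral_mul_apply_comp_sub hp hη).2,
    ← convolution_flip, hflip]

theorem Cnorm_comp_sub (r : ℕ) (φ : Ed d → ℝ) (x : Ed d) :
    Cnorm r (fun z => φ (z - x)) = Cnorm r φ := by
  simp only [Cnorm, iteratedFDeriv_comp_sub]
  exact iSup_congr fun i =>
    (Equiv.subRight x).iSup_comp (g := fun z => ‖iteratedFDeriv ℝ (i : ℕ) φ z‖)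

theorem IsDistribution.exists_abs_apply_comp_sub_le {f : (Ed d → ℝ) →ₗ[ℝ] ℝ}
    (hf : IsDistribution f) (hη : IsTestFunction η) {L : Set (Ed d)} (hL : IsCompact L) :
    ∃ C, ∀ x ∈ L, |f fun z => η (z - x)| ≤ C := by
  obtain ⟨r, C, hC⟩ := hf (L + tsupport η) (hL.add hη.2.isCompact)
  refine ⟨C * Cnorm r η, fun x hx => ?_⟩
  rw [← Cnorm_comp_sub r η x]
  refine hC _ (hη.comp_sub x) (closure_minimal (fun z hz => ?_) (hL.add hη.2.isCompact).isClosed)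
  exact ⟨x, hx, z - x, subset_tsupport _ hz, add_sub_cancel x z⟩

theorem IsDistribution.exists_abs_integral_mul_apply_comp_sub_le {f : (Ed d → ℝ) →ₗ[ℝ] ℝ}
    (hf : IsDistribution f) (hη : IsTestFunction η) {L : Set (Ed d)} (hL : IsCompact L) :
    ∃ C, ∀ p, IsTestFunction p → Function.support p ⊆ L →
      |∫ x, η x * f (fun z => p (z - x))| ≤ C * ∫ x, |p x| := by
  obtain ⟨C, hC⟩ := hf.exists_abs_apply_comp_sub_le hη hL
  refine ⟨C, fun p hp hpL => ?_⟩
  rw [hf.integral_mul_apply_comp_sub_comm hη hp, ← integral_const_mul, ← Real.norm_eq_abs]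
  refine norm_integral_le_of_norm_le (hp.integrable.abs.const_mul C) (ae_of_all _ fun x => ?_)
  rw [norm_mul, mul_comm]
  by_cases hx : p x = 0
  · simp [hx]
  · exact mul_le_mul_of_nonneg_right (hC x (hpL hx)) (norm_nonneg _)

end Translates

section Divergence

open scoped Topology

variable {d : ℕ} {ψ : Ed d → ℝ}

theorem exists_isTestFunction_tsupport_eq_closedBall (c : Ed d) {ρ : ℝ} (hρ : 0 < ρ) :
    ∃ η : Ed d → ℝ, IsTestFunction η ∧ tsupport η = closedBall c ρ ∧ (∀ x, 0 ≤ η x) ∧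
      ∫ x, η x = 1 := by
  let b : ContDiffBump c := ⟨ρ / 2, ρ, half_pos hρ, half_lt_self hρ⟩
  exact ⟨b.normed volume, ⟨b.contDiff_normed, b.hasCompactSupport_normed⟩, b.tsupport_normed_eq,
    b.nonneg_normed, b.integral_normed⟩

theorem abs_le_abs_integral_mul_add {X : Type*} [MeasurableSpace X] {μ : Measure X}
    {η h : X → ℝ} (hη : ∀ x, 0 ≤ η x) (hη_int : ∫ x, η x ∂μ = 1)
    (hint : Integrable (fun x => η x * h x) μ) {a D : ℝ} (hD : ∀ x, η x ≠ 0 → |h x - a| ≤ D) :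
    |a| ≤ |∫ x, η x * h x ∂μ| + D := by
  have hη_integrable : Integrable η μ :=
    .of_integral_ne_zero (by rw [hη_int]; exact one_ne_zero)
  have hsub : (∫ x, η x * h x ∂μ) - a = ∫ x, η x * (h x - a) ∂μ := by
    simp only [mul_sub]
    rw [integral_sub hint (hη_integrable.mul_const a), integral_mul_const, hη_int, one_mul]
  have hclose : |(∫ x, η x * h x ∂μ) - a| ≤ D := by
    rw [hsub, ← one_mul D, ← hη_int, ← integral_mul_const, ← Real.norm_eq_abs]
    refine norm_integral_le_of_norm_le (hη_integrable.mul_const D) (ae_of_all _ fun x => ?_)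
    rw [norm_mul, Real.norm_of_nonneg (hη x)]
    by_cases hx : η x = 0
    · simp only [hx, zero_mul, le_refl]
    · exact mul_le_mul_of_nonneg_left (hD x hx) (hη x)
  calc |a| ≤ |∫ x, η x * h x ∂μ| + |a - ∫ x, η x * h x ∂μ| := by
        rw [← sub_le_iff_le_add']; exact abs_sub_abs_le_abs_sub _ _
    _ ≤ |∫ x, η x * h x ∂μ| + D := by rw [abs_sub_comm]; gcongr

theorem IsDistribution.exists_abs_le_of_abs_apply_scaled_sub_le {f : (Ed d → ℝ) →ₗ[ℝ] ℝ}
    (hf : IsDistribution f) (hψ : IsTestFunction ψ) (c : Ed d) {ρ : ℝ} (hρ : 0 < ρ) :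
    ∃ B, ∀ l ∈ Ioc (0 : ℝ) 1, ∀ a D : ℝ,
      (∀ x ∈ closedBall c ρ, |f (scaled ψ x l) - a| ≤ D) → |a| ≤ B + D := by
  obtain ⟨η, hη, hηsupp, hη_nonneg, hη_int⟩ := exists_isTestFunction_tsupport_eq_closedBall c hρ
  obtain ⟨R, hR⟩ := hψ.2.isCompact.isBounded.subset_closedBall (0 : Ed d)
  obtain ⟨C, hC⟩ := hf.exists_abs_integral_mul_apply_comp_sub_le hη
    (isCompact_closedBall (0 : Ed d) R)
  refine ⟨C * ∫ x, |ψ x|, fun l hl a D hD => ?_⟩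
  have hp : IsTestFunction (scaled ψ 0 l) := hψ.scaled 0 hl.1
  have haverage := hC _ hp (support_scaled_zero_subset ((subset_tsupport ψ).trans hR) hl)
  rw [integral_abs_scaled ψ 0 hl.1] at haverage
  refine (abs_le_abs_integral_mul_add hη_nonneg hη_int
    (hf.integrable_and_integral_mul_apply_comp_sub hη hp).1 fun x hx => ?_).trans
    (add_le_add_left haverage D)
  rw [← scaled_eq_scaled_zero_comp_sub]
  exact hD x (hηsupp ▸ subset_tsupport η hx)

theorem IsDistribution.not_eventually_abs_apply_scaled_sub_log_kernel_le [Nontrivial (Ed d)]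
    {f : (Ed d → ℝ) →ₗ[ℝ] ℝ} (hf : IsDistribution f) {F : Ed d → ((Ed d → ℝ) →ₗ[ℝ] ℝ)}
    (hF : ∀ (x : Ed d) (ψ : Ed d → ℝ), IsTestFunction ψ →
      F x ψ = ∫ y, Real.log (1 + ‖y - x‖⁻¹) * ψ y)
    (hψ : IsTestFunction ψ) (c : Ed d) {ρ : ℝ} (hρ : 0 < ρ) {δ : ℝ} (hδ : δ < |∫ x, ψ x|) :
    ¬ ∀ᶠ l in 𝓝[>] (0 : ℝ), ∀ x ∈ closedBall c ρ,
      |f (scaled ψ x l) - F x (scaled ψ x l)| ≤ δ * Real.log (1 + l⁻¹) := by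
  intro hsmall
  obtain ⟨C, hC⟩ := exists_abs_integral_log_mul_scaled_sub_le hψ
  obtain ⟨B, hB⟩ := hf.exists_abs_le_of_abs_apply_scaled_sub_le hψ c hρ
  have hle_one : ∀ᶠ l : ℝ in 𝓝[>] 0, l ∈ Ioc 0 1 := Ioc_mem_nhdsGT one_pos
  have hdiverge := tendsto_log_one_add_inv_nhdsGT_zero.eventually_gt_atTop
    ((B + C) / (|∫ x, ψ x| - δ))
  obtain ⟨l, hl, hfF, hlog⟩ := (hle_one.and (hsmall.and hdiverge)).exists
  have hFlog (x : Ed d) : |F x (scaled ψ x l) - Real.log (1 + l⁻¹) * ∫ w, ψ w| ≤ C := by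
    rw [hF x _ (hψ.scaled x hl.1)]
    simpa using hC x x l hl.1
  have hbound := hB l hl _ _ fun x hx =>
    (abs_sub_le _ _ _).trans (add_le_add (hfF x hx) (hFlog x))
  rw [abs_mul, abs_of_nonneg (Real.log_nonneg (by simp [hl.1.le]))] at hbound
  rw [div_lt_iff₀ (sub_pos.2 hδ)] at hlog
  linarith

end Divergence

theorem stmt10_general {d : ℕ} (hd : 0 < d) (F : Ed d → ((Ed d → ℝ) →ₗ[ℝ] ℝ))
    (hF : ∀ (x : Ed d) (ψ : Ed d → ℝ), IsTestFunction ψ →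
      F x ψ = ∫ y, Real.log (1 + ‖y - x‖⁻¹) * ψ y) :
    (∀ α : ℝ, α < 0 → ∀ φ : Ed d → ℝ, IsTestFunction φ → AlphaGammaCoherent α 0 F φ) ∧
    (∀ ψ : Ed d → ℝ, IsTestFunction ψ → ∀ c : Ed d, ∀ ρ > 0, ∀ δ < |∫ x, ψ x|,
      ¬ ∃ f : (Ed d → ℝ) →ₗ[ℝ] ℝ, IsDistribution f ∧ ∃ l₀ : ℝ, 0 < l₀ ∧
        ∀ l ∈ Set.Ioc (0:ℝ) l₀, ∀ x ∈ closedBall c ρ,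
          |f (scaled ψ x l) - F x (scaled ψ x l)| ≤ δ * Real.log (1 + 1 / l)) := by
  have : Nonempty (Fin d) := ⟨⟨0, hd⟩⟩
  refine ⟨fun α hα φ hφ => alphaGammaCoherent_of_log_kernel hF hα hφ, ?_⟩
  rintro ψ hψ c ρ hρ δ hδ ⟨f, hf, l₀, hl₀, hsmall⟩
  refine hf.not_eventually_abs_apply_scaled_sub_log_kernel_le hF hψ c hρ hδ ?_
  filter_upwards [Ioc_mem_nhdsGT hl₀] with l hl
  simpa only [one_div] using hsmall l hl

/-- Optimality of the logarithmic rate for γ = 0, via the germ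
`F_x(y) = log(1 + 1/|y − x|)`. -/
theorem stmt10 {d : ℕ} (hd : 0 < d) (F : Ed d → ((Ed d → ℝ) →ₗ[ℝ] ℝ))
    (hF : ∀ (x : Ed d) (ψ : Ed d → ℝ), IsTestFunction ψ →
      F x ψ = ∫ y, Real.log (1 + ‖y - x‖⁻¹) * ψ y) :
    (∀ α : ℝ, α < 0 → ∀ φ : Ed d → ℝ, IsTestFunction φ →
      tsupport φ ⊆ closedBall (0 : Ed d) 1 → (∀ z, 0 ≤ φ z) → 0 < ∫ x, φ x →
      AlphaGammaCoherent α 0 F φ) ∧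
    (∀ ψ : Ed d → ℝ, IsTestFunction ψ → (∀ z, 0 ≤ ψ z) → 0 < ψ 0 → (∫ x, ψ x) = 1 →
      ¬ ∃ f : (Ed d → ℝ) →ₗ[ℝ] ℝ, IsDistribution f ∧
        ∀ δ : ℝ, 0 < δ → ∃ l₀ : ℝ, 0 < l₀ ∧
          ∀ l ∈ Set.Ioc (0:ℝ) l₀, ∀ x ∈ closedBall (0 : Ed d) 2,
            |f (scaled ψ x l) - F x (scaled ψ x l)| ≤ δ * Real.log (1 + 1 / l)) := by
  have ⟨coherent, optimal⟩ := stmt10_general hd F hF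
  exact ⟨fun α hα φ hφ _ _ _ => coherent α hα φ hφ, fun ψ hψ _ _ hi ⟨f, hf, hsmall⟩ =>
    optimal ψ hψ 0 2 two_pos (1 / 2) (by norm_num [hi]) ⟨f, hf, hsmall _ one_half_pos⟩⟩
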